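/- arXiv:1904.02366 — 3 statements merged into one kernel-verified Lean document; each statement's English description precedes it below -/
import Mathlib

section
/- Let N ≥ 1 and let U be a unitary N×N complex matrix. Fix i, j : Fin N. Then the sum, over all functions α : Fin N → Fin N satisfying α i = j, of the products ∏_{k : Fin N} ‖U (α k) k‖² equals ‖U j i‖². -/
open scoped BigOperators

/-! The filtered set of maps is a product of finite sets: `{j}` in coordinate `i`, everything in the
other coordinates. Hence the sum of products factors as a product of column sums
(`Finset.prod_univ_sum`). Coordinate `i` contributes `‖U j i‖²`, and every other factor is the
squared norm of a column of a unitary matrix, which is `1` (`sum_norm_sq_col_eq_one`). -/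

theorem sum_norm_sq_col_eq_one {N : ℕ} (U : Matrix.unitaryGroup (Fin N) ℂ) (k : Fin N) :
    ∑ l : Fin N, ‖(U : Matrix (Fin N) (Fin N) ℂ) l k‖ ^ 2 = 1 := by
  have h := congrFun (congrFun (Matrix.UnitaryGroup.star_mul_self U) k) k
  rw [Matrix.mul_apply, Matrix.one_apply_eq] at h
  have h' : ((∑ l : Fin N, ‖(U : Matrix (Fin N) (Fin N) ℂ) l k‖ ^ 2 : ℝ) : ℂ) = 1 := by
    rw [← h]
    push_cast
    refine Finset.sum_congr rfl fun l _ => ?_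
    rw [Matrix.star_apply]
    exact (Complex.conj_mul' _).symm
  exact_mod_cast h'

/-- For a unitary `N × N` complex matrix `U` and fixed `i j : Fin N`,
the sum over all mappings `α : Fin N → Fin N` with `α i = j` of
`∏ k, ‖U (α k) k‖²` equals `‖U j i‖²`. -/
theorem random_mapping_marginal_eq_transition_probability
    (N : ℕ) (hN : 1 ≤ N) (U : Matrix.unitaryGroup (Fin N) ℂ) (i j : Fin N) :
    ∑ α ∈ Finset.univ.filter (fun α : Fin N → Fin N => α i = j),
      ∏ k : Fin N, ‖(U : Matrix (Fin N) (Fin N) ℂ) (α k) k‖ ^ 2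
      = ‖(U : Matrix (Fin N) (Fin N) ℂ) j i‖ ^ 2 := by
  have hset : Finset.univ.filter (fun α : Fin N → Fin N => α i = j) =
      Fintype.piFinset (fun k => if k = i then {j} else Finset.univ) := by
    ext α
    simp only [Finset.mem_filter, Finset.mem_univ, true_and, Fintype.mem_piFinset]
    constructor
    · intro h k
      by_cases hk : k = i
      · subst hk; simp [h]
      · simp [hk]
    · intro h
      simpa using h i
  rw [hset, ← Finset.prod_univ_sum (fun k => if k = i then {j} else Finset.univ)
    (fun k l => ‖(U : Matrix (Fin N) (Fin N) ℂ) l k‖ ^ 2),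
    Finset.prod_eq_single i]
  · simp
  · intro k _ hk
    simpa [hk] using sum_norm_sq_col_eq_one U k
  · simp
end

section
/- Let (Ω, 𝒜, μ) be a probability space, let (ℱ_t)_{t ∈ ℕ} be a filtration of sub-σ-algebras of 𝒜, and let δ be a real number with 0 < δ < √2. Let (A_t)_{t ≥ 1} be a sequence of events with A_t ∈ ℱ_t for each t ≥ 1, and suppose that for each t ≥ 1 the conditional expectation μ[1_{A_t} | ℱ_{t-1}] ≥ (1 - δ²/2)² holds μ-almost everywhere. Then for every t ≥ 1, μ(⋃_{s = 1}^{t} A_s) ≥ 1 - Real.exp (-(t : ℝ) * Real.log (4 / (4·δ² - δ⁴))). -/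
open MeasureTheory

/-!
Let `p = (1 - δ²/2)²` and let `U t` be the union of `A 1, …, A t`. The event `(U t)ᶜ` lies in
`ℱ t`, so integrating the bound on the conditional probability of `A (t + 1)` over it gives
`μ (A (t + 1) ∩ (U t)ᶜ) ≥ p * μ (U t)ᶜ` (`mul_measureReal_le_of_le_condExp`). Each step therefore
multiplies the probability of failure by at most `1 - p`, and `1 - μ (U t) ≤ (1 - p) ^ t`
(`one_sub_measureReal_biUnion_le`). Finally `1 - p = (4δ² - δ⁴) / 4`, which is positive because
`0 < δ² < 2`, so `(1 - p) ^ t` is the stated exponential.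
-/

/-- An almost sure lower bound `p` on the conditional probability of `B` given `m` bounds the
probability of `B` within any `m`-measurable event `S`. -/
lemma mul_measureReal_le_of_le_condExp {Ω : Type*} {m m0 : MeasurableSpace Ω} (μ : Measure Ω)
    [IsProbabilityMeasure μ] (hm : m ≤ m0) {B S : Set Ω} (hB : MeasurableSet B)
    (hS : MeasurableSet[m] S) {p : ℝ}
    (h : ∀ᵐ ω ∂μ, p ≤ (μ[B.indicator (fun _ => (1 : ℝ)) | m]) ω) :
    p * μ.real S ≤ μ.real (B ∩ S) := by
  have hint : Integrable (B.indicator (fun _ => (1 : ℝ))) μ :=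
    (integrable_const 1).indicator hB
  calc p * μ.real S = ∫ _ in S, p ∂μ := by simp [mul_comm]
    _ ≤ ∫ ω in S, (μ[B.indicator (fun _ => (1 : ℝ)) | m]) ω ∂μ :=
        setIntegral_mono_ae (integrable_const p).integrableOn
          integrable_condExp.integrableOn h
    _ = ∫ ω in S, B.indicator (fun _ => (1 : ℝ)) ω ∂μ := setIntegral_condExp hm hint hS
    _ = μ.real (B ∩ S) := by
        rw [integral_indicator_const _ hB]
        simp [measureReal_restrict_apply hB]

/-- Geometric decay of the failure probability: each step multiplies it by at most `1 - p`. -/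
lemma one_sub_measureReal_biUnion_le {Ω : Type*} {m0 : MeasurableSpace Ω} (μ : Measure Ω)
    [IsProbabilityMeasure μ] (ℱ : Filtration ℕ m0) {p : ℝ} (hp : p ≤ 1) (A : ℕ → Set Ω)
    (hA : ∀ t, 1 ≤ t → MeasurableSet[ℱ t] (A t))
    (hcond : ∀ t, 1 ≤ t →
      ∀ᵐ ω ∂μ, p ≤ (μ[(A t).indicator (fun _ => (1 : ℝ)) | ℱ (t - 1)]) ω) (t : ℕ) :
    1 - μ.real (⋃ s ∈ Finset.Icc 1 t, A s) ≤ (1 - p) ^ t := by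
  induction t with
  | zero => simp
  | succ n ih =>
    set U := ⋃ s ∈ Finset.Icc 1 n, A s with hU
    have hUm : MeasurableSet[ℱ n] U :=
      Finset.measurableSet_biUnion _ fun s hs =>
        ℱ.mono (Finset.mem_Icc.1 hs).2 _ (hA s (Finset.mem_Icc.1 hs).1)
    have hUm0 : MeasurableSet U := ℱ.le n _ hUm
    have hBm : MeasurableSet (A (n + 1)) := ℱ.le _ _ (hA _ (by omega))
    have hunion : (⋃ s ∈ Finset.Icc 1 (n + 1), A s) = U ∪ (A (n + 1) ∩ Uᶜ) := by
      rw [← Finset.insert_Icc_right_eq_Icc_add_one (by omega), Finset.set_biUnion_insert, ← hU,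
        ← Set.sdiff_eq, Set.union_sdiff_self, Set.union_comm]
    have hstep := mul_measureReal_le_of_le_condExp μ (ℱ.le n) hBm hUm.compl
      (hcond (n + 1) (by omega))
    rw [probReal_compl_eq_one_sub hUm0] at hstep
    have hdisj : Disjoint U (A (n + 1) ∩ Uᶜ) :=
      Set.disjoint_left.2 fun _ hx hx' => hx'.2 hx
    rw [hunion, measureReal_union hdisj (hBm.inter hUm0.compl) (measure_ne_top _ _)
      (measure_ne_top _ _), pow_succ]
    have := mul_le_mul_of_nonneg_right ih (sub_nonneg.2 hp)
    linarith

/-- if `0 < δ < √2` and `(A t)` is a sequence of events adapted to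
the filtration `ℱ` with conditional success probability at least `(1 - δ²/2)²`
at every step `t ≥ 1`, then the probability that at least one of `A 1, …, A t`
occurs is at least `1 - exp (-t * log (4 / (4δ² - δ⁴)))`. -/
theorem hitting_probability_exponential_bound
    {Ω : Type*} {m0 : MeasurableSpace Ω} (μ : Measure Ω) [IsProbabilityMeasure μ]
    (ℱ : Filtration ℕ m0) (δ : ℝ) (hδ0 : 0 < δ) (hδ2 : δ < Real.sqrt 2)
    (A : ℕ → Set Ω)
    (hA : ∀ t, 1 ≤ t → MeasurableSet[ℱ t] (A t))
    (hcond : ∀ t, 1 ≤ t →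
      ∀ᵐ ω ∂μ, (1 - δ ^ 2 / 2) ^ 2 ≤
        (μ[(A t).indicator (fun _ => (1 : ℝ)) | ℱ (t - 1)]) ω) :
    ∀ t : ℕ, 1 ≤ t →
      1 - Real.exp (-(t : ℝ) * Real.log (4 / (4 * δ ^ 2 - δ ^ 4))) ≤
        (μ (⋃ s ∈ Finset.Icc 1 t, A s)).toReal := by
  intro t _
  have hsq : δ ^ 2 < 2 := (Real.lt_sqrt hδ0.le).1 hδ2
  have hr : 0 < 4 * δ ^ 2 - δ ^ 4 := by nlinarith [pow_pos hδ0 2]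
  have hp : (1 - δ ^ 2 / 2) ^ 2 ≤ 1 := by nlinarith
  have hexp : Real.exp (-(t : ℝ) * Real.log (4 / (4 * δ ^ 2 - δ ^ 4))) =
      (1 - (1 - δ ^ 2 / 2) ^ 2) ^ t := by
    have h1 : 1 - (1 - δ ^ 2 / 2) ^ 2 = (4 / (4 * δ ^ 2 - δ ^ 4))⁻¹ := by
      rw [inv_div]; ring
    rw [h1, neg_mul, ← mul_neg, ← Real.log_inv, Real.exp_nat_mul,
      Real.exp_log (by positivity)]
  have := one_sub_measureReal_biUnion_le μ ℱ hp A hA hcond t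
  rw [hexp]
  change _ ≤ μ.real _
  linarith
end

section
/- There exists a unitary 4×4 complex matrix U such that for all i, j : Fin 4, ‖U i j‖² = W i j, where W is the real doubly stochastic matrix with rows (1/12, 1/6, 1/4, 1/2), (1/6, 1/12, 1/2, 1/4), (1/4, 1/2, 1/12, 1/6), (1/2, 1/4, 1/6, 1/12). In particular, W is unistochastic. -/
/-!
The matrix `W` is the Kronecker product of the doubly stochastic matrices with rows
`(1/4, 3/4), (3/4, 1/4)` and `(1/3, 2/3), (2/3, 1/3)`. A `2 × 2` doubly stochastic matrix with
first row `(c², s²)` is the matrix of squared entries of the reflection with rows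
`(c, s), (s, -c)`, so the Kronecker product of two such real reflections, written out in
`reflectionKronecker`, is an orthogonal matrix whose squared entries are those of `W`.
-/

/-- The Kronecker product of the matrices with rows `(c, s), (s, -c)` and `(a, b), (b, -a)`,
indexed by `Fin 4` in lexicographic order and regarded as a complex matrix. -/
noncomputable def reflectionKronecker (c s a b : ℝ) : Matrix (Fin 4) (Fin 4) ℂ :=
  (!![c * a, c * b, s * a, s * b;
      c * b, -(c * a), s * b, -(s * a);
      s * a, s * b, -(c * a), -(c * b);
      s * b, -(s * a), -(c * b), c * a] : Matrix (Fin 4) (Fin 4) ℝ).map Complex.ofReal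

theorem reflectionKronecker_mem_unitaryGroup {c s a b : ℝ}
    (hcs : c ^ 2 + s ^ 2 = 1) (hab : a ^ 2 + b ^ 2 = 1) :
    reflectionKronecker c s a b ∈ Matrix.unitaryGroup (Fin 4) ℂ := by
  have h : ((c : ℂ) ^ 2 + s ^ 2) * ((a : ℂ) ^ 2 + b ^ 2) = 1 := by
    exact_mod_cast (by rw [hcs, hab, one_mul] : (c ^ 2 + s ^ 2) * (a ^ 2 + b ^ 2) = 1)
  rw [Matrix.mem_unitaryGroup_iff]
  ext i j
  fin_cases i <;> fin_cases j <;>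
    simp [reflectionKronecker, Matrix.mul_apply, Fin.sum_univ_four, Matrix.star_apply] <;>
    first
      | ring1
      | linear_combination h

/-- the doubly stochastic matrix `W` with rows
`(1/12, 1/6, 1/4, 1/2)`, `(1/6, 1/12, 1/2, 1/4)`, `(1/4, 1/2, 1/12, 1/6)`,
`(1/2, 1/4, 1/6, 1/12)` is unistochastic: there is a unitary `4 × 4` complex
matrix `U` with `‖U i j‖² = W i j` for all `i, j`. -/
theorem example_matrix_unistochastic :
    ∃ U : Matrix.unitaryGroup (Fin 4) ℂ, ∀ i j : Fin 4,
      ‖(U : Matrix (Fin 4) (Fin 4) ℂ) i j‖ ^ 2 =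
        !![(1 : ℝ)/12, 1/6, 1/4, 1/2;
           1/6, 1/12, 1/2, 1/4;
           1/4, 1/2, 1/12, 1/6;
           1/2, 1/4, 1/6, 1/12] i j := by
  have hc : √(1 / 4 : ℝ) ^ 2 = 1 / 4 := Real.sq_sqrt (by norm_num)
  have hs : √(3 / 4 : ℝ) ^ 2 = 3 / 4 := Real.sq_sqrt (by norm_num)
  have ha : √(1 / 3 : ℝ) ^ 2 = 1 / 3 := Real.sq_sqrt (by norm_num)
  have hb : √(2 / 3 : ℝ) ^ 2 = 2 / 3 := Real.sq_sqrt (by norm_num)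
  -- Generalizing keeps `simp` from rewriting the square roots away from the forms above.
  generalize √(1 / 4 : ℝ) = c at hc
  generalize √(3 / 4 : ℝ) = s at hs
  generalize √(1 / 3 : ℝ) = a at ha
  generalize √(2 / 3 : ℝ) = b at hb
  refine ⟨⟨reflectionKronecker c s a b, reflectionKronecker_mem_unitaryGroup
    (by rw [hc, hs]; norm_num) (by rw [ha, hb]; norm_num)⟩, fun i j => ?_⟩
  fin_cases i <;> fin_cases j <;>
    simp [reflectionKronecker, mul_pow, hc, hs, ha, hb] <;> norm_num
end
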